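/- Let n ≥ 2 and let t : {1,…,2n} → {A,B} be a type assignment with t(1)=B, t(2)=A, t(3)=A, and t(i)=A for some i > 3. Then every stable matching of the instance contains the pair {2,3}, and the stable matchings of the instance are exactly the sets M' ∪ {{2,3}} where M' ranges over the stable matchings of the restricted 1-attribute instance on {1} ∪ {4,…,2n}. -/

import Mathlib

/-!
Suppose a stable matching `M` misses `{2, 3}`. Persons `2` and `3` have type `A`, so unless one of
them is matched with `1` each of them prefers the other to the own partner, and `{2, 3}` blocks. If
`1` is matched with `2` or `3`, take `i > 3` of type `A`: person `1`, of type `B`, prefers `i`,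
and `i` likes `1` best of all, so `{1, i}` blocks. Hence `{2, 3} ∈ M` (`pair_mem_of_isStable`).

Among people other than `2` and `3`, adding or removing the pair `{2, 3}` does not change any
partner, hence does not change which pairs block (`isBlocking_union_pair_iff`). The only new danger
when `{2, 3}` is added is a blocking pair that contains `2` or `3`; its other member
must then be `1`, but `1` has a partner `≥ 4` and prefers that partner
(`not_isBlocking_of_mem_pair`).
-/

/-- The two preference types in the 1-attribute stable roommate model. -/
inductive AttrType : Type
  | A : AttrType
  | B : AttrType
  deriving DecidableEq

/-- In the 1-attribute instance with type assignment `t`, person `i`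
prefers person `j` to person `k`: type `A` people prefer smaller indices,
type `B` people prefer larger indices. -/
def Prefers (t : ℕ → AttrType) (i j k : ℕ) : Prop :=
  match t i with
  | AttrType.A => j < k
  | AttrType.B => k < j

/-- `M` is a matching of the people in `S`: a partition of `S` into
unordered pairs. -/
def IsMatching (S : Finset ℕ) (M : Finset (Finset ℕ)) : Prop :=
  (∀ p ∈ M, ∃ i j, i ≠ j ∧ i ∈ S ∧ j ∈ S ∧ p = {i, j}) ∧
  (∀ i ∈ S, ∃! p, p ∈ M ∧ i ∈ p)

/-- The pair `{i, j}` is a blocking pair for the matching `M`: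
it is not in `M`, and each of `i`, `j` prefers the other to their
partner in `M`. -/
def IsBlocking (t : ℕ → AttrType) (M : Finset (Finset ℕ)) (i j : ℕ) : Prop :=
  i ≠ j ∧ ({i, j} : Finset ℕ) ∉ M ∧
  (∀ k, ({i, k} : Finset ℕ) ∈ M → k ≠ i → Prefers t i j k) ∧
  (∀ k, ({j, k} : Finset ℕ) ∈ M → k ≠ j → Prefers t j i k)

/-- `M` is a stable matching of the 1-attribute instance on the set of
people `S` with type assignment `t`. -/
def IsStable (t : ℕ → AttrType) (S : Finset ℕ) (M : Finset (Finset ℕ)) : Prop :=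
  IsMatching S M ∧ ∀ i ∈ S, ∀ j ∈ S, ¬ IsBlocking t M i j

theorem prefers_A {t : ℕ → AttrType} {i j k : ℕ} (h : t i = AttrType.A) :
    Prefers t i j k ↔ j < k := by
  simp [Prefers, h]

theorem prefers_B {t : ℕ → AttrType} {i j k : ℕ} (h : t i = AttrType.B) :
    Prefers t i j k ↔ k < j := by
  simp [Prefers, h]

theorem IsBlocking.symm {t : ℕ → AttrType} {M : Finset (Finset ℕ)} {i j : ℕ}
    (h : IsBlocking t M i j) : IsBlocking t M j i :=
  ⟨h.1.symm, by rw [Finset.pair_comm]; exact h.2.1, h.2.2.2, h.2.2.1⟩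

theorem IsMatching.exists_partner {S : Finset ℕ} {M : Finset (Finset ℕ)} (h : IsMatching S M)
    {i : ℕ} (hi : i ∈ S) : ∃ k ∈ S, k ≠ i ∧ ({i, k} : Finset ℕ) ∈ M := by
  obtain ⟨p, ⟨hp, hip⟩, -⟩ := h.2 i hi
  obtain ⟨a, b, hab, ha, hb, rfl⟩ := h.1 p hp
  rcases Finset.mem_insert.1 hip with rfl | hib
  · exact ⟨b, hb, hab.symm, hp⟩
  · obtain rfl := Finset.mem_singleton.1 hib
    exact ⟨a, ha, hab, by rwa [Finset.pair_comm]⟩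

theorem eq_of_pair_eq {i k l : ℕ} (h : ({i, k} : Finset ℕ) = {i, l}) (hk : k ≠ i) : k = l := by
  have hmem : k ∈ ({i, l} : Finset ℕ) := by rw [← h]; simp
  simpa [hk] using hmem

theorem IsMatching.partner_unique {S : Finset ℕ} {M : Finset (Finset ℕ)} (h : IsMatching S M)
    {i k l : ℕ} (hi : i ∈ S) (hk : ({i, k} : Finset ℕ) ∈ M) (hki : k ≠ i)
    (hl : ({i, l} : Finset ℕ) ∈ M) : k = l :=
  eq_of_pair_eq ((h.2 i hi).unique ⟨hk, by simp⟩ ⟨hl, by simp⟩) hki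

theorem IsMatching.mem_of_mem {S : Finset ℕ} {M : Finset (Finset ℕ)} (h : IsMatching S M)
    {p : Finset ℕ} (hp : p ∈ M) {i : ℕ} (hi : i ∈ p) : i ∈ S := by
  obtain ⟨a, b, -, ha, hb, rfl⟩ := h.1 p hp
  rcases Finset.mem_insert.1 hi with rfl | hib
  · exact ha
  · rwa [Finset.mem_singleton.1 hib]

/-- If `1` is matched with `2` or `3`, then `1` and any type-`A` person `i > 3` block. -/
theorem false_of_one_matched_low {S : Finset ℕ} {t : ℕ → AttrType} {M : Finset (Finset ℕ)}
    (hM : IsStable t S M) (hS : ∀ i ∈ S, 1 ≤ i) (h1S : 1 ∈ S) (h1 : t 1 = AttrType.B)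
    {i c : ℕ} (hiS : i ∈ S) (hi3 : 3 < i) (hiA : t i = AttrType.A)
    (hc1 : c ≠ 1) (hc3 : c ≤ 3) (hc : ({1, c} : Finset ℕ) ∈ M) : False := by
  have hnot : ({1, i} : Finset ℕ) ∉ M := fun h => by
    have := hM.1.partner_unique h1S hc hc1 h
    omega
  refine hM.2 1 h1S i hiS ⟨by omega, hnot, fun k hk hk1 => ?_, fun k hk hki => ?_⟩
  · rw [prefers_B h1, ← hM.1.partner_unique h1S hc hc1 hk]
    omega
  · rw [prefers_A hiA]
    have hk0 := hS k (hM.1.mem_of_mem hk (by simp))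
    have hk1 : k ≠ 1 := by
      rintro rfl
      exact hnot (by rwa [Finset.pair_comm])
    omega

theorem pair_mem_of_isStable {S : Finset ℕ} {t : ℕ → AttrType} {M : Finset (Finset ℕ)}
    (hM : IsStable t S M) (hS : ∀ i ∈ S, 1 ≤ i) (h1S : 1 ∈ S) (h2S : 2 ∈ S) (h3S : 3 ∈ S)
    (h1 : t 1 = AttrType.B) (h2 : t 2 = AttrType.A) (h3 : t 3 = AttrType.A)
    {i : ℕ} (hiS : i ∈ S) (hi3 : 3 < i) (hiA : t i = AttrType.A) :
    ({2, 3} : Finset ℕ) ∈ M := by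
  by_contra hnot
  refine hM.2 2 h2S 3 h3S ⟨by omega, hnot, fun k hk hk2 => ?_, fun k hk hk3 => ?_⟩
  · rw [prefers_A h2]
    have hk0 := hS k (hM.1.mem_of_mem hk (by simp))
    have hk1 : k ≠ 1 := by
      rintro rfl
      exact false_of_one_matched_low hM hS h1S h1 hiS hi3 hiA (c := 2) (by omega) (by omega)
        (by rwa [Finset.pair_comm])
    have hk3 : k ≠ 3 := by
      rintro rfl
      exact hnot hk
    omega
  · rw [prefers_A h3]
    have hk0 := hS k (hM.1.mem_of_mem hk (by simp))
    have hk1 : k ≠ 1 := by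
      rintro rfl
      exact false_of_one_matched_low hM hS h1S h1 hiS hi3 hiA (c := 3) (by omega) (by omega)
        (by rwa [Finset.pair_comm])
    have hk2 : k ≠ 2 := by
      rintro rfl
      exact hnot (by rwa [Finset.pair_comm])
    omega

theorem pair_mem_union_pair_iff {M : Finset (Finset ℕ)} {a b i k : ℕ} (ha : i ≠ a) (hb : i ≠ b) :
    ({i, k} : Finset ℕ) ∈ M ∪ {({a, b} : Finset ℕ)} ↔ ({i, k} : Finset ℕ) ∈ M := by
  have hne : ({i, k} : Finset ℕ) ≠ {a, b} := fun h => by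
    have hmem : i ∈ ({a, b} : Finset ℕ) := by rw [← h]; simp
    simp [ha, hb] at hmem
  simp [hne]

theorem isBlocking_union_pair_iff {t : ℕ → AttrType} {M : Finset (Finset ℕ)} {a b i j : ℕ}
    (hia : i ≠ a) (hib : i ≠ b) (hja : j ≠ a) (hjb : j ≠ b) :
    IsBlocking t (M ∪ {({a, b} : Finset ℕ)}) i j ↔ IsBlocking t M i j := by
  simp only [IsBlocking, pair_mem_union_pair_iff hia hib, pair_mem_union_pair_iff hja hjb]

theorem IsMatching.erase_pair {S : Finset ℕ} {M : Finset (Finset ℕ)} (h : IsMatching S M)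
    {a b : ℕ} (hab : ({a, b} : Finset ℕ) ∈ M) :
    IsMatching ((S.erase a).erase b) (M.erase {a, b}) := by
  have ha := h.mem_of_mem hab (i := a) (by simp)
  have hb := h.mem_of_mem hab (i := b) (by simp)
  constructor
  · intro p hp
    obtain ⟨hpne, hpM⟩ := Finset.mem_erase.1 hp
    obtain ⟨i, j, hij, hi, hj, rfl⟩ := h.1 p hpM
    -- A pair of `M` that meets `{a, b}` equals `{a, b}`.
    have hout : ∀ x ∈ ({i, j} : Finset ℕ), x ≠ b ∧ x ≠ a := by
      intro x hx
      constructor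
      · rintro rfl
        exact hpne ((h.2 x hb).unique ⟨hpM, hx⟩ ⟨hab, by simp⟩)
      · rintro rfl
        exact hpne ((h.2 x ha).unique ⟨hpM, hx⟩ ⟨hab, by simp⟩)
    have hi' := hout i (by simp)
    have hj' := hout j (by simp)
    exact ⟨i, j, hij, by simp [hi', hi], by simp [hj', hj], rfl⟩
  · intro i hi
    simp only [Finset.mem_erase] at hi
    obtain ⟨p, ⟨hp, hip⟩, huniq⟩ := h.2 i hi.2.2
    refine ⟨p, ⟨Finset.mem_erase.2 ⟨?_, hp⟩, hip⟩, fun q hq => ?_⟩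
    · rintro rfl
      simp [hi.1, hi.2.1] at hip
    · exact huniq q ⟨(Finset.mem_erase.1 hq.1).2, hq.2⟩

theorem IsMatching.union_pair {S : Finset ℕ} {M : Finset (Finset ℕ)} (h : IsMatching S M)
    {a b : ℕ} (hab : a ≠ b) (ha : a ∉ S) (hb : b ∉ S) :
    IsMatching (insert a (insert b S)) (M ∪ {({a, b} : Finset ℕ)}) := by
  constructor
  · intro p hp
    rcases Finset.mem_union.1 hp with hp | hp
    · obtain ⟨i, j, hij, hi, hj, rfl⟩ := h.1 p hp
      exact ⟨i, j, hij, by simp [hi], by simp [hj], rfl⟩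
    · exact ⟨a, b, hab, by simp, by simp, Finset.mem_singleton.1 hp⟩
  · intro i hi
    by_cases hiS : i ∈ S
    · obtain ⟨p, ⟨hp, hip⟩, huniq⟩ := h.2 i hiS
      refine ⟨p, ⟨Finset.mem_union_left _ hp, hip⟩, fun q hq => ?_⟩
      rcases Finset.mem_union.1 hq.1 with hqM | hqM
      · exact huniq q ⟨hqM, hq.2⟩
      · have hiab := hq.2
        rw [Finset.mem_singleton.1 hqM] at hiab
        rcases Finset.mem_insert.1 hiab with rfl | hib
        · exact absurd hiS ha
        · exact absurd (Finset.mem_singleton.1 hib ▸ hiS) hb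
    · have hiab : i ∈ ({a, b} : Finset ℕ) := by
        simp only [Finset.mem_insert, hiS, or_false] at hi
        simpa using hi
      refine ⟨{a, b}, ⟨by simp, hiab⟩, fun q hq => ?_⟩
      rcases Finset.mem_union.1 hq.1 with hqM | hqM
      · exact absurd (h.mem_of_mem hqM hq.2) hiS
      · exact Finset.mem_singleton.1 hqM

/-- After adding `{2, 3}`, neither `2` nor `3` is in a blocking pair: each of them could only
prefer `1`, while `1` prefers the partner it already has, who is at least `4`. -/
theorem not_isBlocking_of_mem_pair {S : Finset ℕ} {t : ℕ → AttrType} {M : Finset (Finset ℕ)}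
    (hM : IsMatching S M) (h1S : 1 ∈ S) (hS4 : ∀ i ∈ S, i = 1 ∨ 4 ≤ i)
    (h1 : t 1 = AttrType.B) (h2 : t 2 = AttrType.A) (h3 : t 3 = AttrType.A)
    {i j : ℕ} (hi : i = 2 ∨ i = 3) (hj : 1 ≤ j) :
    ¬ IsBlocking t (M ∪ {({2, 3} : Finset ℕ)}) i j := by
  rintro ⟨hij, hnot, hbi, hbj⟩
  have hj1 : j = 1 := by
    rcases hi with rfl | rfl
    · have hlt := (prefers_A h2).1 (hbi 3 (by simp) (by omega))
      omega
    · have hlt := (prefers_A h3).1 (hbi 2 (by simp [Finset.pair_comm]) (by omega))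
      omega
  subst hj1
  obtain ⟨k, hkS, hk1, hk⟩ := hM.exists_partner h1S
  have hlt := (prefers_B h1).1 (hbj k (Finset.mem_union_left _ hk) hk1)
  have hk4 := hS4 k hkS
  omega

/-- Case (T2): types 1B, 2A, 3A and iA for some i > 3.  Every stable matching
contains the pair {2,3}, and the stable matchings are exactly the stable
matchings of the restricted instance on {1} ∪ {4,…,2n} together with {2,3}. -/
theorem one_attribute_case_BAnA (n : ℕ) (hn : 2 ≤ n) (t : ℕ → AttrType)
    (h1 : t 1 = AttrType.B) (h2 : t 2 = AttrType.A) (h3 : t 3 = AttrType.A)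
    (hi : ∃ i, 3 < i ∧ i ≤ 2 * n ∧ t i = AttrType.A) :
    (∀ M : Finset (Finset ℕ), IsStable t (Finset.Icc 1 (2 * n)) M →
      ({2, 3} : Finset ℕ) ∈ M) ∧
    (∀ M : Finset (Finset ℕ), IsStable t (Finset.Icc 1 (2 * n)) M ↔
      ∃ M' : Finset (Finset ℕ),
        IsStable t (insert 1 (Finset.Icc 4 (2 * n))) M' ∧
        M = M' ∪ {({2, 3} : Finset ℕ)}) := by
  obtain ⟨i₀, hi3, hin, hiA⟩ := hi
  have hpair : ∀ M : Finset (Finset ℕ), IsStable t (Finset.Icc 1 (2 * n)) M →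
      ({2, 3} : Finset ℕ) ∈ M := fun M hM =>
    pair_mem_of_isStable hM (fun i hi => (Finset.mem_Icc.1 hi).1)
      (Finset.mem_Icc.2 (by omega)) (Finset.mem_Icc.2 (by omega)) (Finset.mem_Icc.2 (by omega))
      h1 h2 h3 (Finset.mem_Icc.2 (by omega)) hi3 hiA
  refine ⟨hpair, fun M => ⟨fun hM => ?_, ?_⟩⟩
  · have h23 := hpair M hM
    have hS : ((Finset.Icc 1 (2 * n)).erase 2).erase 3 = insert 1 (Finset.Icc 4 (2 * n)) := by
      ext x
      simp only [Finset.mem_erase, Finset.mem_insert, Finset.mem_Icc]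
      omega
    have hMeq : M = M.erase {2, 3} ∪ {({2, 3} : Finset ℕ)} := by
      rw [Finset.union_comm, ← Finset.insert_eq, Finset.insert_erase h23]
    refine ⟨M.erase {2, 3}, ⟨hS ▸ hM.1.erase_pair h23, fun i hi j hj hblock => ?_⟩, hMeq⟩
    rw [← hS] at hi hj
    simp only [Finset.mem_erase] at hi hj
    rw [← isBlocking_union_pair_iff hi.2.1 hi.1 hj.2.1 hj.1, ← hMeq] at hblock
    exact hM.2 i hi.2.2 j hj.2.2 hblock
  · rintro ⟨M', hM', rfl⟩
    have hS : insert 2 (insert 3 (insert 1 (Finset.Icc 4 (2 * n)))) = Finset.Icc 1 (2 * n) := by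
      ext x
      simp only [Finset.mem_insert, Finset.mem_Icc]
      omega
    have hS4 : ∀ i ∈ insert 1 (Finset.Icc 4 (2 * n)), i = 1 ∨ 4 ≤ i := by
      intro i hi
      simp only [Finset.mem_insert, Finset.mem_Icc] at hi
      omega
    refine ⟨hS ▸ hM'.1.union_pair (by omega) (by simp) (by simp), fun i hi j hj hblock => ?_⟩
    by_cases hi23 : i = 2 ∨ i = 3
    · exact not_isBlocking_of_mem_pair hM'.1 (by simp) hS4 h1 h2 h3 hi23
        (Finset.mem_Icc.1 hj).1 hblock
    by_cases hj23 : j = 2 ∨ j = 3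
    · exact not_isBlocking_of_mem_pair hM'.1 (by simp) hS4 h1 h2 h3 hj23
        (Finset.mem_Icc.1 hi).1 hblock.symm
    push Not at hi23 hj23
    rw [isBlocking_union_pair_iff hi23.1 hi23.2 hj23.1 hj23.2] at hblock
    rw [← hS] at hi hj
    simp only [Finset.mem_insert (a := _) (b := 2), Finset.mem_insert (b := 3), hi23, hj23,
      false_or] at hi hj
    exact hM'.2 i hi j hj hblock
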